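/- arXiv:2601.18879 — 2 statements merged into one kernel-verified Lean document; each statement's English description precedes it below -/
import Mathlib

section
/- Let S = F₂[w, x, y, z] / ⟨w² − 1, x² − 1, y² − 1, z² − 1⟩, a 16-dimensional commutative F₂-algebra, and let F = (1 + x)(1 + yz), G = (1 + y)(1 + zw), H = (1 + z)(1 + wx), I = (1 + w)(1 + xy) in S. Let d₂ : S⁶ → S⁴ and d₃ : S⁴ → S⁶ be the S-linear maps given by multiplication by the block matrices D₂ = [[G,H,I,0,0,0],[F,0,0,H,I,0],[0,F,0,G,0,I],[0,0,F,0,G,H]] and D₃ = [[H,I,0,0],[G,0,I,0],[0,G,H,0],[F,0,0,I],[0,F,0,H],[0,0,F,G]], viewed as F₂-linear maps between F₂-vector spaces of dimensions 96 and 64. Then d₂ ∘ d₃ = 0 and dim_{F₂} ker(d₂) − dim_{F₂} im(d₃) = 44; i.e., this multivariate multicycle code encodes k = 44 logical qubits in n = 96 physical qubits. -/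
open MvPolynomial Matrix

set_option synthInstance.maxHeartbeats 1000000
set_option maxHeartbeats 2000000

noncomputable section

/-- The ideal `⟨w²−1, x²−1, y²−1, z²−1⟩` in `𝔽₂[w,x,y,z]`. -/
def relIdeal : Ideal (MvPolynomial (Fin 4) (ZMod 2)) :=
  Ideal.span {X 0 ^ 2 - 1, X 1 ^ 2 - 1, X 2 ^ 2 - 1, X 3 ^ 2 - 1}

/-- The 16-dimensional commutative `𝔽₂`-algebra `S = 𝔽₂[w,x,y,z]/⟨w²−1, x²−1, y²−1, z²−1⟩`. -/
abbrev Squot : Type := MvPolynomial (Fin 4) (ZMod 2) ⧸ relIdeal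

def wq : Squot := Ideal.Quotient.mk relIdeal (X 0)
def xq : Squot := Ideal.Quotient.mk relIdeal (X 1)
def yq : Squot := Ideal.Quotient.mk relIdeal (X 2)
def zq : Squot := Ideal.Quotient.mk relIdeal (X 3)

/-- `F = (1 + x)(1 + yz)`. -/ def Fq : Squot := (1 + xq) * (1 + yq * zq)
/-- `G = (1 + y)(1 + zw)`. -/ def Gq : Squot := (1 + yq) * (1 + zq * wq)
/-- `H = (1 + z)(1 + wx)`. -/ def Hq : Squot := (1 + zq) * (1 + wq * xq)
/-- `I = (1 + w)(1 + xy)`. -/ def Iq : Squot := (1 + wq) * (1 + xq * yq)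

/-- Second Koszul boundary map `D₂`. -/
def D2 : Matrix (Fin 4) (Fin 6) Squot :=
  !![Gq, Hq, Iq, 0, 0, 0;
     Fq, 0, 0, Hq, Iq, 0;
     0, Fq, 0, Gq, 0, Iq;
     0, 0, Fq, 0, Gq, Hq]

/-- Third Koszul boundary map `D₃`. -/
def D3 : Matrix (Fin 6) (Fin 4) Squot :=
  !![Hq, Iq, 0, 0;
     Gq, 0, Iq, 0;
     0, Gq, Hq, 0;
     Fq, 0, 0, Iq;
     0, Fq, 0, Hq;
     0, 0, Fq, Gq]


theorem sq_w : wq * wq = 1 := by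
  have : Ideal.Quotient.mk relIdeal (X 0 ^ 2 - 1) = 0 :=
    Ideal.Quotient.eq_zero_iff_mem.mpr (Ideal.subset_span (by simp))
  rw [map_sub, map_pow, map_one, sub_eq_zero, pow_two] at this
  exact this
theorem sq_x : xq * xq = 1 := by
  have : Ideal.Quotient.mk relIdeal (X 1 ^ 2 - 1) = 0 :=
    Ideal.Quotient.eq_zero_iff_mem.mpr (Ideal.subset_span (by simp))
  rw [map_sub, map_pow, map_one, sub_eq_zero, pow_two] at this
  exact this
theorem sq_y : yq * yq = 1 := by
  have : Ideal.Quotient.mk relIdeal (X 2 ^ 2 - 1) = 0 :=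
    Ideal.Quotient.eq_zero_iff_mem.mpr (Ideal.subset_span (by simp))
  rw [map_sub, map_pow, map_one, sub_eq_zero, pow_two] at this
  exact this
theorem sq_z : zq * zq = 1 := by
  have : Ideal.Quotient.mk relIdeal (X 3 ^ 2 - 1) = 0 :=
    Ideal.Quotient.eq_zero_iff_mem.mpr (Ideal.subset_span (by simp))
  rw [map_sub, map_pow, map_one, sub_eq_zero, pow_two] at this
  exact this

def bt (b : Bool) (u : Squot) : Squot := if b then u else 1

theorem bt_mul (u : Squot) (hu : u * u = 1) (a b : Bool) :
    bt a u * bt b u = bt (a ^^ b) u := by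
  cases a <;> cases b <;> simp [bt, hu]

/-- monomial basis -/
def bs (i : Fin 16) : Squot :=
  bt (i.val.testBit 0) wq * bt (i.val.testBit 1) xq *
    bt (i.val.testBit 2) yq * bt (i.val.testBit 3) zq

theorem xor_val (i j : Fin 16) : (i ^^^ j).val = i.val ^^^ j.val := by
  revert i j; decide +kernel

theorem bs_mul (i j : Fin 16) : bs i * bs j = bs (i ^^^ j) := by
  have hv := xor_val i j
  unfold bs
  rw [hv]
  simp only [Nat.testBit_xor]
  rw [← bt_mul _ sq_w, ← bt_mul _ sq_x, ← bt_mul _ sq_y, ← bt_mul _ sq_z]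
  ring

theorem smul_eqC (a : ZMod 2) (s : Squot) : a • s = Ideal.Quotient.mk relIdeal (C a) * s := by
  obtain ⟨p, rfl⟩ := Ideal.Quotient.mk_surjective s
  rw [← map_mul, ← MvPolynomial.smul_eq_C_mul]; rfl

theorem bs_span : ⊤ ≤ Submodule.span (ZMod 2) (Set.range bs) := by
  have key : ∀ (k : Fin 16) (s : Squot), s ∈ Submodule.span (ZMod 2) (Set.range bs) →
      s * bs k ∈ Submodule.span (ZMod 2) (Set.range bs) := by
    intro k s hs
    induction hs using Submodule.span_induction with
    | mem x hx =>
      obtain ⟨i, rfl⟩ := hx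
      rw [bs_mul]
      exact Submodule.subset_span ⟨_, rfl⟩
    | zero => simp
    | add x y _ _ hx hy => rw [add_mul]; exact add_mem hx hy
    | smul a x _ hx => rw [smul_mul_assoc]; exact Submodule.smul_mem _ _ hx
  intro s _
  obtain ⟨p, rfl⟩ := Ideal.Quotient.mk_surjective s
  induction p using MvPolynomial.induction_on with
  | C a =>
    have h : Ideal.Quotient.mk relIdeal (C a) = a • bs 0 := by
      have : bs 0 = 1 := by simp [bs, bt]
      rw [this, smul_eqC, mul_one]
    rw [h]
    exact Submodule.smul_mem _ _ (Submodule.subset_span ⟨_, rfl⟩)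
  | add p q hp hq => rw [map_add]; exact add_mem (hp trivial) (hq trivial)
  | mul_X p n hp =>
    rw [map_mul]
    have : ∃ k, Ideal.Quotient.mk relIdeal (X n) = bs k := by
      fin_cases n
      · exact ⟨1, by simp [bs, bt, wq, Nat.testBit]⟩
      · exact ⟨2, by simp [bs, bt, xq, Nat.testBit]⟩
      · exact ⟨4, by simp [bs, bt, yq, Nat.testBit]⟩
      · exact ⟨8, by simp [bs, bt, zq, Nat.testBit]⟩
    obtain ⟨k, hk⟩ := this
    rw [hk]
    exact key k _ (hp trivial)

abbrev GA : Type := AddMonoidAlgebra (ZMod 2) (Fin 4 → ZMod 2)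

def gX (i : Fin 4) : GA := AddMonoidAlgebra.single (Pi.single i 1) 1

theorem gX_sq (i : Fin 4) : gX i ^ 2 = 1 := by
  rw [pow_two, gX, AddMonoidAlgebra.single_mul_single, AddMonoidAlgebra.one_def]
  congr 1
  · revert i; decide +kernel

def toGA : Squot →+* GA :=
  Ideal.Quotient.lift relIdeal (aeval (R := ZMod 2) gX).toRingHom (by
    have : relIdeal ≤ RingHom.ker (aeval (R := ZMod 2) gX).toRingHom := by
      unfold relIdeal
      rw [Ideal.span_le]
      intro a ha
      simp only [Set.mem_insert_iff, Set.mem_singleton_iff] at ha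
      rcases ha with rfl | rfl | rfl | rfl <;> simp [RingHom.mem_ker, gX_sq]
    intro a ha
    exact this ha)

theorem toGA_w : toGA wq = gX 0 := by simp [toGA, wq]
theorem toGA_x : toGA xq = gX 1 := by simp [toGA, xq]
theorem toGA_y : toGA yq = gX 2 := by simp [toGA, yq]
theorem toGA_z : toGA zq = gX 3 := by simp [toGA, zq]

def gv (i : Fin 16) : Fin 4 → ZMod 2 := fun k => if i.val.testBit k.val then 1 else 0

theorem toGA_bt (c : Bool) (u : Squot) (k : Fin 4) (h : toGA u = gX k) :
    toGA (bt c u) = AddMonoidAlgebra.single (if c then Pi.single k 1 else 0) 1 := by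
  cases c
  · simp [bt, AddMonoidAlgebra.one_def]
  · simp [bt, h, gX]

theorem toGA_bs (i : Fin 16) : toGA (bs i) = AddMonoidAlgebra.single (gv i) 1 := by
  unfold bs
  rw [map_mul, map_mul, map_mul, toGA_bt _ _ _ toGA_w, toGA_bt _ _ _ toGA_x,
    toGA_bt _ _ _ toGA_y, toGA_bt _ _ _ toGA_z]
  simp only [AddMonoidAlgebra.single_mul_single, mul_one]
  congr 1
  revert i; decide +kernel

theorem gv_inj : Function.Injective gv := by
  have : ∀ i j, gv i = gv j → i = j := by decide +kernel
  exact fun i j => this i j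

theorem bs_indep : LinearIndependent (ZMod 2) bs := by
  rw [Fintype.linearIndependent_iff]
  intro g hg i
  have h1 := congrArg toGA hg
  have h3 : ∀ (c : ZMod 2) (s : Squot), toGA (c • s) = c • toGA s := by
    intro c s
    rcases (by decide +revert : c = 0 ∨ c = 1) with rfl | rfl
    · rw [show (0 : ZMod 2) • s = 0 from zero_smul (ZMod 2) s, map_zero, zero_smul]
    · rw [show (1 : ZMod 2) • s = s from one_smul (ZMod 2) s, one_smul]
  rw [map_sum, map_zero] at h1
  simp only [h3, toGA_bs] at h1
  have h2 := congrArg (fun a : GA => a.coeff (gv i)) h1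
  simpa [Finsupp.single_apply, gv_inj.eq_iff, AddMonoidAlgebra.coeff_sum] using h2

def bb : Module.Basis (Fin 16) (ZMod 2) Squot := Module.Basis.mk bs_indep bs_span

theorem bb_apply (i : Fin 16) : bb i = bs i := by simp [bb]

abbrev ee : Squot ≃ₗ[ZMod 2] (Fin 16 → ZMod 2) := bb.equivFun

theorem ee_bs (k i : Fin 16) : ee (bs k) i = if k = i then 1 else 0 := by
  rw [← bb_apply, Module.Basis.equivFun_apply, Module.Basis.repr_self, Finsupp.single_apply]

theorem ee_mul_bs (j : Fin 16) (s : Squot) (i : Fin 16) : ee (s * bs j) i = ee s (i ^^^ j) := by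
  have hs : s ∈ Submodule.span (ZMod 2) (Set.range bs) := bs_span trivial
  induction hs using Submodule.span_induction with
  | mem x hx =>
    obtain ⟨k, rfl⟩ := hx
    rw [bs_mul, ee_bs, ee_bs]
    have h : k ^^^ j = i ↔ k = i ^^^ j := by
      rw [Fin.ext_iff, Fin.ext_iff, xor_val, xor_val]
      constructor
      · intro h; rw [← h, Nat.xor_assoc, Nat.xor_self, Nat.xor_zero]
      · intro h; rw [h, Nat.xor_assoc, Nat.xor_self, Nat.xor_zero]
    simp only [h]
  | zero => rw [zero_mul, map_zero]; rfl
  | add x y _ _ hx hy => rw [add_mul, map_add, map_add, Pi.add_apply, Pi.add_apply, hx, hy]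
  | smul a x _ hx =>
    rw [smul_mul_assoc, map_smul, map_smul, Pi.smul_apply, Pi.smul_apply, hx]

theorem ee_mul (s t : Squot) (i : Fin 16) : ee (s * t) i = ∑ j, ee s (i ^^^ j) * ee t j := by
  have ht : t ∈ Submodule.span (ZMod 2) (Set.range bs) := bs_span trivial
  induction ht using Submodule.span_induction with
  | mem x hx =>
    obtain ⟨k, rfl⟩ := hx
    rw [ee_mul_bs]
    simp only [ee_bs]
    simp
  | zero => rw [mul_zero, map_zero]; simp
  | add x y _ _ hx hy =>
    rw [mul_add, map_add, map_add, Pi.add_apply, hx, hy]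
    simp only [Pi.add_apply, mul_add, Finset.sum_add_distrib]
  | smul a x _ hx =>
    rw [mul_smul_comm, map_smul, map_smul, Pi.smul_apply, hx]
    simp only [Pi.smul_apply, smul_eq_mul, Finset.mul_sum]
    exact Finset.sum_congr rfl fun _ _ => by ring

theorem ee_four (a b c d : Fin 16) (k : Fin 16) : ee (bs a + bs b + bs c + bs d) k =
  ((if a = k then (1 : ZMod 2) else 0) + (if b = k then 1 else 0) +
  (if c = k then 1 else 0) + (if d = k then 1 else 0)) := by
  rw [map_add, map_add, map_add]
  simp only [Pi.add_apply, ee_bs]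

theorem ee_F (k : Fin 16) : ee Fq k = if Nat.testBit 20485 k.val then 1 else 0 := by
  have : Fq = bs 0 + bs 2 + bs 12 + bs 14 := by
    simp [Fq, bs, bt, Nat.testBit]; ring
  rw [this, ee_four]
  revert k; decide +kernel
theorem ee_G (k : Fin 16) : ee Gq k = if Nat.testBit 8721 k.val then 1 else 0 := by
  have : Gq = bs 0 + bs 4 + bs 9 + bs 13 := by
    simp [Gq, bs, bt, Nat.testBit]; ring
  rw [this, ee_four]
  revert k; decide +kernel
theorem ee_H (k : Fin 16) : ee Hq k = if Nat.testBit 2313 k.val then 1 else 0 := by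
  have : Hq = bs 0 + bs 8 + bs 3 + bs 11 := by
    simp [Hq, bs, bt, Nat.testBit]; ring
  rw [this, ee_four]
  revert k; decide +kernel
theorem ee_I (k : Fin 16) : ee Iq k = if Nat.testBit 195 k.val then 1 else 0 := by
  have : Iq = bs 0 + bs 1 + bs 6 + bs 7 := by
    simp [Iq, bs, bt, Nat.testBit]; ring
  rw [this, ee_four]
  revert k; decide +kernel

/-- Bit masks of the coefficients of the block entries of `D2`. -/
def mask2 (p : Fin 4) (q : Fin 6) : ℕ :=
  match p.val, q.val with
  | 0, 0 => 8721 | 0, 1 => 2313 | 0, 2 => 195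
  | 1, 0 => 20485 | 1, 3 => 2313 | 1, 4 => 195
  | 2, 1 => 20485 | 2, 3 => 8721 | 2, 5 => 195
  | 3, 2 => 20485 | 3, 4 => 8721 | 3, 5 => 2313
  | _, _ => 0

def M2 : Matrix (Fin 4 × Fin 16) (Fin 6 × Fin 16) (ZMod 2) := fun a b =>
  if (mask2 a.1 b.1).testBit (a.2.val ^^^ b.2.val) then 1 else 0

def rowI : List ℕ := [0, 1, 2, 3, 4, 5, 8, 10, 16, 17, 18, 20, 21, 24, 26, 32, 33, 34, 36, 40, 42, 48, 49, 50, 52, 56]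
def colJ : List ℕ := [0, 1, 2, 3, 4, 5, 8, 16, 17, 18, 20, 21, 24, 32, 33, 36, 37, 48, 49, 50, 52, 56, 64, 65, 66, 80]
def numV : List ℕ := [32702364284699519097336027201, 78991496398268432440535082114, 32701443425514180927968806980, 78991213058558281673271690376, 46605011214552890067690519120, 31691749232303522909068987040, 74567682349005019077566070528, 18569100594219181492994113536, 72535554115074744579129344, 78918677504443272903720173568, 32701443425513973122679701504, 78991213058558067266891546624, 26511743224148874756850974720, 29826941451210248141129383936, 76431031797354290808457527296, 1864487243523793188925997056, 44740250361976237340210757632, 18642840352748907611742535680, 51173905219300715432771584000, 60422112479096336230800949248, 1204220814508323042754560, 27962529488776880025596067840, 46604574849877050666296279040, 74566949090927863946343874560, 31691748561276185630119821312, 79226953588444722964369244160]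
def numK : List ℕ := [58570522, 1954900, 58556437, 1933403, 56637314, 52096527, 8043138, 1048795, 236303, 1973204, 58556482, 1933363, 57507906, 60489231, 16449039, 44066048, 29386186, 1342223, 51828239, 793359, 31503, 51303951, 60843264, 12254735, 52100623, 1743631]

def numM : List ℕ := [837670216209, 837619683618, 257799129156, 257849640072, 260123402769, 259314946338, 839135561796, 839943996552, 214404919005474, 214404868481553, 65970798740616, 65970849286212, 65973123027234, 65972314579473, 214406384338056, 214407192807492, 3597766145994494332933, 3597549128787450437642, 1107238678836660948997, 1107455696043704885258, 1117221470360681055568, 1113749195047978404512, 3604059644998767871312, 3607531920311470525088, 920862115211201948419408, 920861898193994904504992, 283342423006592800654672, 283342640023799844571808, 283352405798116820799493, 283348933522804118167562, 920868408710206221996037, 920871880985518924668938, 235740537279595962303840256, 235740536059401939605651456, 72535558995850839399399424, 72535554115074744579129344, 72535551631621022465130496, 72535550411426998513565696, 235740544643825776731357184, 235740539763049680657711104, 60349576916396837649274372096, 60349576917617031673404194816, 18569100594218901114987741184, 18569100599099677211239645184, 18569100590515253372682305536, 18569100591735447398065504256, 60349576920100485394086559744, 60349576924981261491591839744, 2796406294823792084500086784,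 1864244521265441442300428288, 1864807110066113453800554496, 2796569050446842406279053312, 44740087606353269159681327104, 29826698728951649970755207168, 29827261317752404123504869376, 44740250361976237340210757632, 2796326328188150412344295424, 1864324487900836690707611648, 1864487243523793188925997056, 2796888916988916247405002752, 44740007639717791770024607744, 29826778695587373784160534528, 29826941451210248141129383936, 44740570228518639746334851072]

def selI (t : Fin 26) : Fin 4 × Fin 16 :=
  (Fin.ofNat 4 (rowI.getD t.val 0 / 16), Fin.ofNat 16 (rowI.getD t.val 0))
def selJ (t : Fin 26) : Fin 6 × Fin 16 :=
  (Fin.ofNat 6 (colJ.getD t.val 0 / 16), Fin.ofNat 16 (colJ.getD t.val 0))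
def matV : Matrix (Fin 26) (Fin 6 × Fin 16) (ZMod 2) := fun t b =>
  if (numV.getD t.val 0).testBit (16 * b.1.val + b.2.val) then 1 else 0
def matK : Matrix (Fin 26) (Fin 26) (ZMod 2) := fun t s =>
  if (numK.getD t.val 0).testBit s.val then 1 else 0

def b2 (b : Bool) : ZMod 2 := if b then 1 else 0

/-- xor of the `v t` over those `t` in the list with `u t` set -/
def xr {n : ℕ} (u : Fin n → Bool) (v : Fin n → ℕ) : List (Fin n) → ℕ
  | [] => 0
  | t :: l => bif u t then v t ^^^ xr u v l else xr u v l

theorem b2_xor (a b : Bool) : b2 (a ^^ b) = b2 a + b2 b := by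
  cases a <;> cases b <;> decide

theorem xr_bit {n : ℕ} (u : Fin n → Bool) (v : Fin n → ℕ) (b : ℕ) (l : List (Fin n)) :
    b2 ((xr u v l).testBit b) = (l.map fun t => b2 (u t) * b2 ((v t).testBit b)).sum := by
  induction l with
  | nil => simp [xr, b2]
  | cons t l ih =>
    rw [List.map_cons, List.sum_cons, ← ih]
    cases h : u t
    · simp [xr, h, b2]
    · simp [xr, h, b2_xor]
      simp [b2]

theorem xr_sum {n : ℕ} (u : Fin n → Bool) (v : Fin n → ℕ) (b : ℕ) :
    ∑ t, b2 (u t) * b2 ((v t).testBit b) = b2 ((xr u v (List.finRange n)).testBit b) := by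
  rw [xr_bit, Fin.sum_univ_def]

def rowN (a : Fin 4 × Fin 16) : ℕ := numM.getD (16 * a.1.val + a.2.val) 0

theorem M2_rowN (a : Fin 4 × Fin 16) (b : Fin 6 × Fin 16) :
    M2 a b = b2 ((rowN a).testBit (16 * b.1.val + b.2.val)) := by
  have h : ∀ (p : Fin 4) (i : Fin 16) (q : Fin 6) (j : Fin 16),
      (mask2 p q).testBit (i.val ^^^ j.val) = (rowN (p, i)).testBit (16 * q.val + j.val) := by
    decide +kernel
  obtain ⟨p, i⟩ := a
  obtain ⟨q, j⟩ := b
  rw [← h]; rfl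

theorem M2_factor : M2 = (M2.submatrix id selJ) * matV := by
  have h : ∀ p i, xr (fun t : Fin 26 => (rowN (p, i)).testBit
      (16 * (selJ t).1.val + (selJ t).2.val)) (fun t => numV.getD t.val 0) (List.finRange 26) =
      rowN (p, i) := by
    decide +kernel
  ext ⟨p, i⟩ b
  rw [M2_rowN, ← h, ← xr_sum, Matrix.mul_apply]
  refine Finset.sum_congr rfl fun t _ => ?_
  rw [Matrix.submatrix_apply, M2_rowN]; rfl

theorem K_mul : matK * (M2.submatrix selI id) = matV := by
  have h : ∀ s : Fin 26, xr (fun t : Fin 26 => (numK.getD s.val 0).testBit t.val)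
      (fun t => rowN (selI t)) (List.finRange 26) = numV.getD s.val 0 := by
    decide +kernel
  ext s b
  have hV : matV s b = b2 ((numV.getD s.val 0).testBit (16 * b.1.val + b.2.val)) := rfl
  rw [hV, ← h, ← xr_sum, Matrix.mul_apply]
  refine Finset.sum_congr rfl fun t _ => ?_
  rw [Matrix.submatrix_apply, M2_rowN]; rfl

theorem V_sel : matV.submatrix id selJ = 1 := by
  have h : ∀ s t : Fin 26, (numV.getD s.val 0).testBit
      (16 * (selJ t).1.val + (selJ t).2.val) = decide (s = t) := by
    decide +kernel
  ext s t
  have hV : matV.submatrix id selJ s t = b2 ((numV.getD s.val 0).testBit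
      (16 * (selJ t).1.val + (selJ t).2.val)) := rfl
  rw [hV, h, Matrix.one_apply]
  simp [b2]

theorem M2_inv : matK * (M2.submatrix selI selJ) = 1 := by
  rw [← V_sel, ← K_mul]
  rfl

theorem M2_rank : M2.rank = 26 := by
  apply le_antisymm
  · rw [M2_factor]
    refine (Matrix.rank_mul_le_left _ _).trans ?_
    simpa using Matrix.rank_le_card_width (M2.submatrix id selJ)
  · have h1 : (M2.submatrix selI selJ).rank = 26 := by
      have hu : IsUnit (M2.submatrix selI selJ) :=
        ⟨⟨_, _, mul_eq_one_comm.mp M2_inv, M2_inv⟩, rfl⟩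
      simpa using Matrix.rank_of_isUnit _ hu
    have h2 : M2.submatrix selI selJ =
        (1 : Matrix (Fin 4 × Fin 16) (Fin 4 × Fin 16) (ZMod 2)).submatrix selI id * M2 *
        (1 : Matrix (Fin 6 × Fin 16) (Fin 6 × Fin 16) (ZMod 2)).submatrix id selJ := by
      rw [Matrix.mul_assoc]
      ext s t
      simp [Matrix.mul_apply, Matrix.one_apply]
    rw [← h1, h2]
    exact (Matrix.rank_mul_le_left _ _).trans (Matrix.rank_mul_le_right _ _)

theorem ee_D2 (p : Fin 4) (q : Fin 6) (k : Fin 16) :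
    ee (D2 p q) k = if (mask2 p q).testBit k.val then 1 else 0 := by
  have z : ee 0 k = if Nat.testBit 0 k.val then 1 else 0 := by
    rw [map_zero]; simp
  fin_cases p
  · fin_cases q
    exacts [ee_G k, ee_H k, ee_I k, z, z, z]
  · fin_cases q
    exacts [ee_F k, z, z, ee_H k, ee_I k, z]
  · fin_cases q
    exacts [z, ee_F k, z, ee_G k, z, ee_I k]
  · fin_cases q
    exacts [z, z, ee_F k, z, ee_G k, ee_H k]

def EE (n : ℕ) : (Fin n → Squot) ≃ₗ[ZMod 2] (Fin n × Fin 16 → ZMod 2) :=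
  (LinearEquiv.piCongrRight fun _ => ee) ≪≫ₗ
    (LinearEquiv.curry (ZMod 2) (ZMod 2) (Fin n) (Fin 16)).symm

theorem EE_apply (n : ℕ) (v : Fin n → Squot) (a : Fin n × Fin 16) :
    EE n v a = ee (v a.1) a.2 := rfl

def M3 : Matrix (Fin 6 × Fin 16) (Fin 4 × Fin 16) (ZMod 2) :=
  (M2.submatrix (Equiv.prodCongr Fin.revPerm (Equiv.refl (Fin 16)))
    (Equiv.prodCongr Fin.revPerm (Equiv.refl (Fin 16))))ᵀ

theorem M3_rank : M3.rank = 26 := by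
  rw [M3, Matrix.rank_transpose, Matrix.rank_submatrix, M2_rank]

theorem rev_gen {α : Type} (F G H I o : α) (q : Fin 6) (p : Fin 4) :
    (!![H, I, o, o; G, o, I, o; o, G, H, o; F, o, o, I; o, F, o, H; o, o, F, G] :
      Matrix (Fin 6) (Fin 4) α) q p =
    (!![G, H, I, o, o, o; F, o, o, H, I, o; o, F, o, G, o, I; o, o, F, o, G, H] :
      Matrix (Fin 4) (Fin 6) α) p.rev q.rev := by
  fin_cases p <;> fin_cases q <;> rfl

theorem D3_eq (q : Fin 6) (p : Fin 4) : D3 q p = D2 p.rev q.rev :=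
  rev_gen Fq Gq Hq Iq 0 q p

theorem gen_rank {m n : ℕ} (D : Matrix (Fin m) (Fin n) Squot)
    (M : Matrix (Fin m × Fin 16) (Fin n × Fin 16) (ZMod 2))
    (h : ∀ p i q j, M (p, i) (q, j) = ee (D p q) (i ^^^ j)) :
    Module.finrank (ZMod 2) (LinearMap.range (D.mulVecLin.restrictScalars (ZMod 2))) = M.rank := by
  have hc : M.mulVecLin ∘ₗ (EE n).toLinearMap =
      (EE m).toLinearMap ∘ₗ (D.mulVecLin.restrictScalars (ZMod 2)) := by
    apply LinearMap.ext
    intro v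
    funext a
    obtain ⟨p, i⟩ := a
    change (M *ᵥ (EE n v)) (p, i) = ee ((D *ᵥ v) p) i
    rw [Matrix.mulVec, dotProduct, Fintype.sum_prod_type, Matrix.mulVec, dotProduct, map_sum,
      Finset.sum_apply]
    refine Finset.sum_congr rfl fun q _ => ?_
    rw [ee_mul]
    exact Finset.sum_congr rfl fun j _ => by rw [h, EE_apply]
  have hr := congrArg LinearMap.range hc
  rw [LinearMap.range_comp_of_range_eq_top _ (LinearEquiv.range (EE n)), LinearMap.range_comp] at hr
  rw [Matrix.rank, hr]
  exact (LinearEquiv.finrank_map_eq (EE m) _).symm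

theorem D2_rank :
    Module.finrank (ZMod 2) (LinearMap.range (D2.mulVecLin.restrictScalars (ZMod 2))) = 26 := by
  rw [gen_rank D2 M2, M2_rank]
  intro p i q j
  rw [ee_D2, xor_val]; rfl

theorem D3_rank :
    Module.finrank (ZMod 2) (LinearMap.range (D3.mulVecLin.restrictScalars (ZMod 2))) = 26 := by
  rw [gen_rank D3 M3, M3_rank]
  intro p i q j
  rw [D3_eq, ee_D2, xor_val, Nat.xor_comm]; rfl

theorem two_zero (s : Squot) : s + s = 0 := by
  have h : ((1 : ZMod 2) + 1) • s = s + s := by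
    refine (add_smul (1 : ZMod 2) 1 s).trans ?_
    rw [show (1 : ZMod 2) • s = s from one_smul (ZMod 2) s]
  rw [← h, show (1 : ZMod 2) + 1 = 0 by decide]
  exact zero_smul (ZMod 2) s

theorem D2_mul_D3 : D2 * D3 = 0 := by
  have h : ∀ a b : Squot, a * b + b * a = 0 := fun a b => by rw [mul_comm b a, two_zero]
  ext p q
  fin_cases p <;> fin_cases q <;>
    simp [D2, D3, Matrix.mul_apply, Fin.sum_univ_six, h]

theorem fr (n : ℕ) : Module.finrank (ZMod 2) (Fin n → Squot) = n * 16 := by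
  rw [(EE n).finrank_eq]; simp
/-- With `S = 𝔽₂[w,x,y,z]/⟨w²−1, x²−1, y²−1, z²−1⟩` (16-dimensional over `𝔽₂`)
and `F = (1+x)(1+yz)`, `G = (1+y)(1+zw)`, `H = (1+z)(1+wx)`,
`I = (1+w)(1+xy)`, the `𝔽₂`-linear maps `d₂ : S⁶ → S⁴` and `d₃ : S⁴ → S⁶`
given by the Koszul block matrices `D₂`, `D₃` (between spaces of dimensions 96
and 64) satisfy `d₂ ∘ d₃ = 0` and `dim ker d₂ − dim im d₃ = 44`: this
multivariate multicycle code encodes `k = 44` logical qubits in `n = 96`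
physical qubits. -/
theorem mm_code_96_44 :
    Module.finrank (ZMod 2) Squot = 16 ∧
    Module.finrank (ZMod 2) (Fin 6 → Squot) = 96 ∧
    Module.finrank (ZMod 2) (Fin 4 → Squot) = 64 ∧
    (D2.mulVecLin.restrictScalars (ZMod 2)) ∘ₗ
      (D3.mulVecLin.restrictScalars (ZMod 2)) = 0 ∧
    Module.finrank (ZMod 2)
        (LinearMap.ker (D2.mulVecLin.restrictScalars (ZMod 2))) -
      Module.finrank (ZMod 2)
        (LinearMap.range (D3.mulVecLin.restrictScalars (ZMod 2))) = 44 := by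
  refine ⟨?_, fr 6, fr 4, ?_, ?_⟩
  · rw [ee.finrank_eq]; simp
  · apply LinearMap.ext
    intro v
    change D2 *ᵥ (D3 *ᵥ v) = 0
    rw [Matrix.mulVec_mulVec, D2_mul_D3, Matrix.zero_mulVec]
  · have : Module.Finite (ZMod 2) (Fin 6 → Squot) := Module.Finite.equiv (EE 6).symm
    have h := LinearMap.finrank_range_add_finrank_ker (D2.mulVecLin.restrictScalars (ZMod 2))
    rw [D2_rank, fr 6] at h
    rw [D3_rank]
    omega

end
end

section
/- Let S = F₂[w, x, y, z] / ⟨w² − 1, x² − 1, y² − 1, z² − 1⟩ with F₂-basis the 16 monomials wᵃxᵇyᶜzᵈ (a,b,c,d ∈ {0,1}), and let F = (1 + x)(1 + yz), G = (1 + y)(1 + zw), H = (1 + z)(1 + wx), I = (1 + w)(1 + xy) in S. Let d₂ : S⁶ → S⁴ and d₃ : S⁴ → S⁶ be the S-linear maps given by the block matrices D₂ = [[G,H,I,0,0,0],[F,0,0,H,I,0],[0,F,0,G,0,I],[0,0,F,0,G,H]] and D₃ = [[H,I,0,0],[G,0,I,0],[0,G,H,0],[F,0,0,I],[0,F,0,H],[0,0,F,G]].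 For v ∈ S⁶ define the Hamming weight |v| as the number of nonzero coordinates of v with respect to the F₂-basis of S⁶ consisting of monomials in each of the 6 copies of S (so S⁶ ≅ F₂^96 coordinatewise). Then the Z-distance of this code equals 4: every v ∈ ker(d₂) with v ∉ im(d₃) satisfies |v| ≥ 4, and there exists v ∈ ker(d₂) ∖ im(d₃) with |v| = 4. -/
open MvPolynomial Matrix

set_option synthInstance.maxHeartbeats 1000000
set_option maxHeartbeats 2000000

noncomputable section

/-! ### Combinatorial model -/

abbrev Mon : Type := Fin 2 × Fin 2 × Fin 2 × Fin 2

/-- The monomial with exponent vector `g`. -/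
def cmon (g : Mon) : Squot :=
  wq ^ (g.1 : ℕ) * xq ^ (g.2.1 : ℕ) * yq ^ (g.2.2.1 : ℕ) * zq ^ (g.2.2.2 : ℕ)

/-- Coefficient functions of the four polynomials. -/
def aF (g : Mon) : ZMod 2 :=
  if g.1 = 0 ∧ g.2.2.1 = g.2.2.2 then 1 else 0
def aG (g : Mon) : ZMod 2 :=
  if g.2.1 = 0 ∧ g.1 = g.2.2.2 then 1 else 0
def aH (g : Mon) : ZMod 2 :=
  if g.2.2.1 = 0 ∧ g.1 = g.2.1 then 1 else 0
def aI (g : Mon) : ZMod 2 :=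
  if g.2.2.2 = 0 ∧ g.2.1 = g.2.2.1 then 1 else 0

def aD2 : Matrix (Fin 4) (Fin 6) (Mon → ZMod 2) :=
  !![aG, aH, aI, 0, 0, 0;
     aF, 0, 0, aH, aI, 0;
     0, aF, 0, aG, 0, aI;
     0, 0, aF, 0, aG, aH]

/-- The 96 columns of the binary matrix of `D2`, as 64-bit numbers. -/
def colList : List ℕ :=
  [
   10029573, 6685962, 6687237, 10028298,
   10068048, 6705312, 6725712, 10047648,
   2566915338, 1711278597, 1711277322, 2566916613,
   2566934688, 1711317072, 1711296672, 2566955088,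
   657130008579, 438086676483, 438086713356, 657130045452,
   657129997104, 438086665008, 438086667456, 657129999552,
   168225279050544, 112150186033968, 112150186036416, 168225279052992,
   168225279062019, 112150186045443, 112150186082316, 168225279098892,
   43065671436747073, 28710447624520322, 28710447624492052, 43065671436740648,
   43065671436735508, 28710447624497192, 28710447624503617, 43065671436763778,
   11024811887802990913, 7349874591868682882, 7349874591868654612, 11024811887802984488,
   11024811887802979348, 7349874591868659752, 7349874591868666177, 11024811887803007618,
   11017396617216, 5541313314816, 11019813126144, 5543729823744,
   176265511305216, 88648178466816, 176265671737344, 88648338898944,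
   5540561289216, 11016644591616, 5540721721344, 11016805023744,
   88648930492416, 176266263330816, 88651347001344, 176268679839744,
   721983316357611520, 363102722146304000, 721983315599687680, 363102720630456320,
   11551733044542177280, 5809643519981649920, 11551733045300101120, 5809643521497497600,
   363102721051525120, 721983317452390400, 363102720293601280, 721983315936542720,
   5809643519644794880, 11551733044879032320, 5809643520402718720, 11551733046394880000,
   3459680686179352576, 3459752433608032256, 13838457831134593024, 13838479907266494464,
   229705657127796736, 229727733259698176, 918806071412260864, 918877818840940544,
   229755328424574976, 229827075853254656, 918756400115482624, 918778476247384064,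
   3459631014882574336, 3459653091014475776, 13838507502431371264, 13838579249860050944]

def mcode (g : Mon) : ℕ := 8 * g.1.val + 4 * g.2.1.val + 2 * g.2.2.1.val + g.2.2.2.val

def colN (p : Fin 6 × Mon) : ℕ := colList.getD (16 * p.1.val + mcode p.2) 0

def chk1 (x : ℕ) : List ℕ → Bool
  | [] => true
  | c :: l => (!(Nat.beq x c)) && chk1 x l

def chk2 (a : ℕ) : List ℕ → Bool
  | [] => true
  | c :: l => chk1 (Nat.xor a c) l && chk2 a l

def chk3 : List ℕ → Bool
  | [] => true
  | c :: l => chk2 c l && chk3 l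

lemma chk1_spec (x : ℕ) (l : List ℕ) (h : chk1 x l = true) : ∀ c ∈ l, x ≠ c := by
  induction l with
  | nil => simp
  | cons d l ih =>
    simp only [chk1, Bool.and_eq_true, Bool.not_eq_true'] at h
    intro c hc
    rcases List.mem_cons.1 hc with rfl | hc
    · exact Nat.ne_of_beq_eq_false h.1
    · exact ih h.2 c hc

lemma chk2_spec (a : ℕ) (l : List ℕ) (h : chk2 a l = true) :
    ∀ c ∈ l, ∀ d ∈ l, c ≠ d → a ^^^ c ^^^ d ≠ 0 := by
  induction l with
  | nil => simp
  | cons e l ih =>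
    simp only [chk2, Bool.and_eq_true] at h
    have h1 : ∀ d ∈ l, a ^^^ e ^^^ d ≠ 0 := by
      intro d hd h0
      exact chk1_spec _ _ h.1 d hd (Nat.xor_eq_zero_iff.1 h0)
    intro c hc d hd hcd
    rcases List.mem_cons.1 hc with hc | hc <;> rcases List.mem_cons.1 hd with hd | hd
    · exact absurd (hc.trans hd.symm) hcd
    · rw [hc]; exact h1 d hd
    · rw [hd, Nat.xor_assoc, Nat.xor_comm c, ← Nat.xor_assoc]; exact h1 c hc
    · exact ih h.2 c hc d hd hcd

lemma chk3_spec (l : List ℕ) (h : chk3 l = true) :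
    ∀ a ∈ l, ∀ c ∈ l, ∀ d ∈ l, a ≠ c → a ≠ d → c ≠ d → a ^^^ c ^^^ d ≠ 0 := by
  induction l with
  | nil => simp
  | cons e l ih =>
    simp only [chk3, Bool.and_eq_true] at h
    have h1 := chk2_spec _ _ h.1
    intro a ha c hc d hd hac had hcd
    rcases List.mem_cons.1 ha with ha | ha <;> rcases List.mem_cons.1 hc with hc | hc <;>
      rcases List.mem_cons.1 hd with hd | hd
    · exact absurd (ha.trans hc.symm) hac
    · exact absurd (ha.trans hc.symm) hac
    · exact absurd (ha.trans hd.symm) had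
    · rw [ha]; exact h1 c hc d hd hcd
    · exact absurd (hc.trans hd.symm) hcd
    · rw [hc, Nat.xor_comm a]; exact h1 a ha d hd had
    · rw [hd, Nat.xor_comm, ← Nat.xor_assoc]; exact h1 a ha c hc hac
    · exact ih h.2 a ha c hc d hd hac had hcd

lemma colList_chk3 : chk3 colList = true := by decide +kernel

lemma colList_nodup : colList.Nodup := by decide +kernel

lemma colList_pos : ∀ n ∈ colList, n ≠ 0 ∧ n < 2 ^ 64 := by decide +kernel

lemma col_idx_lt (p : Fin 6 × Mon) : 16 * p.1.val + mcode p.2 < colList.length := by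
  have : colList.length = 96 := rfl
  rw [this]; unfold mcode; omega

lemma col_mem (p : Fin 6 × Mon) : colN p ∈ colList := by
  unfold colN
  rw [List.getD_eq_getElem _ _ (col_idx_lt p)]
  exact List.getElem_mem _

lemma col_inj {p q : Fin 6 × Mon} (h : colN p = colN q) : p = q := by
  unfold colN at h
  rw [List.getD_eq_getElem _ _ (col_idx_lt p), List.getD_eq_getElem _ _ (col_idx_lt q),
    colList_nodup.getElem_inj_iff] at h
  obtain ⟨i, a, c, d, e⟩ := p
  obtain ⟨i', a', c', d', e'⟩ := q
  simp only [mcode] at h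
  simp only [Prod.mk.injEq, Fin.ext_iff]
  omega

lemma col_testBit : ∀ (p : Fin 6 × Mon) (j : Fin 4) (h : Mon),
    aD2 j p.1 (h - p.2) = if (colN p).testBit (16 * j.val + mcode h) then 1 else 0 := by
  decide +kernel

lemma mcode_surj (n : ℕ) (hn : n < 64) : ∃ (j : Fin 4) (h : Mon), n = 16 * j.val + mcode h := by
  refine ⟨⟨n / 16, by omega⟩, ⟨⟨n / 8 % 2, by omega⟩, ⟨n / 4 % 2, by omega⟩,
    ⟨n / 2 % 2, by omega⟩, ⟨n % 2, by omega⟩⟩, ?_⟩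
  simp only [mcode]
  omega

/-- No nonempty set of at most three columns sums to zero. -/
lemma comb (P : Finset (Fin 6 × Mon)) (hP : P.card < 4)
    (h0 : ∀ (j : Fin 4) (h : Mon), ∑ p ∈ P, aD2 j p.1 (h - p.2) = 0) : P = ∅ := by
  simp only [col_testBit] at h0
  have hbig : ∀ p n, 64 ≤ n → (colN p).testBit n = false := by
    intro p n hn
    exact Nat.testBit_lt_two_pow
      (lt_of_lt_of_le (colList_pos _ (col_mem p)).2 (Nat.pow_le_pow_right (by norm_num) hn))
  have h1 : ∀ n, ∑ p ∈ P, (if (colN p).testBit n then (1 : ZMod 2) else 0) = 0 := by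
    intro n
    by_cases hn : n < 64
    · obtain ⟨j, h, rfl⟩ := mcode_surj n hn
      exact h0 j h
    · exact Finset.sum_eq_zero fun p _ => by simp [hbig p n (by omega)]
  have hc : P.card = 0 ∨ P.card = 1 ∨ P.card = 2 ∨ P.card = 3 := by omega
  rcases hc with hc | hc | hc | hc
  · exact Finset.card_eq_zero.1 hc
  · exfalso
    obtain ⟨p, rfl⟩ := Finset.card_eq_one.1 hc
    apply (colList_pos _ (col_mem p)).1
    apply Nat.eq_of_testBit_eq
    intro n
    have := h1 n
    simp only [Finset.sum_singleton] at this
    cases h : (colN p).testBit n <;> simp_all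
  · exfalso
    obtain ⟨p, q, hpq, rfl⟩ := Finset.card_eq_two.1 hc
    apply hpq
    apply col_inj
    apply Nat.eq_of_testBit_eq
    intro n
    have := h1 n
    rw [Finset.sum_pair hpq] at this
    cases h : (colN p).testBit n <;> cases h' : (colN q).testBit n <;> simp_all
  · exfalso
    obtain ⟨p, q, r, hpq, hpr, hqr, rfl⟩ := Finset.card_eq_three.1 hc
    apply chk3_spec _ colList_chk3 _ (col_mem p) _ (col_mem q) _ (col_mem r)
      (fun h => hpq (col_inj h)) (fun h => hpr (col_inj h)) (fun h => hqr (col_inj h))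
    apply Nat.eq_of_testBit_eq
    intro n
    have := h1 n
    rw [Finset.sum_insert (by simp [hpq, hpr]), Finset.sum_pair hqr] at this
    rw [Nat.testBit_xor, Nat.testBit_xor, Nat.zero_testBit]
    revert this
    cases (colN p).testBit n <;> cases (colN q).testBit n <;> cases (colN r).testBit n <;> decide

/-! ### The ring `Squot` -/

lemma two_eq : (2 : Squot) = 0 := by
  have : ((2 : ZMod 2)) = 0 := rfl
  have h := congrArg (algebraMap (ZMod 2) Squot) this
  rw [map_zero] at h
  rw [← h]
  exact (map_ofNat (algebraMap (ZMod 2) Squot) 2).symm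

lemma gen_sq (i : Fin 4) : (Ideal.Quotient.mk relIdeal (X i)) ^ 2 = (1 : Squot) := by
  rw [← map_pow, ← map_one (Ideal.Quotient.mk relIdeal), Ideal.Quotient.eq]
  apply Ideal.subset_span
  fin_cases i <;> simp

lemma wq_sq : wq ^ 2 = 1 := gen_sq 0
lemma xq_sq : xq ^ 2 = 1 := gen_sq 1
lemma yq_sq : yq ^ 2 = 1 := gen_sq 2
lemma zq_sq : zq ^ 2 = 1 := gen_sq 3

lemma pow_fin_add (t : Squot) (ht : t ^ 2 = 1) (a c : Fin 2) :
    t ^ (a : ℕ) * t ^ (c : ℕ) = t ^ ((a + c : Fin 2) : ℕ) := by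
  fin_cases a <;> fin_cases c <;> simp [← pow_two, ht]

lemma cmon_mul (g h : Mon) : cmon g * cmon h = cmon (g + h) := by
  simp only [cmon, Prod.fst_add, Prod.snd_add, ← pow_fin_add _ wq_sq, ← pow_fin_add _ xq_sq,
    ← pow_fin_add _ yq_sq, ← pow_fin_add _ zq_sq]
  ring

lemma Fq_eq : Fq = ∑ s, aF s • cmon s := by
  simp [Fintype.sum_prod_type, Fin.sum_univ_two, aF, cmon, Fq]
  ring

lemma Gq_eq : Gq = ∑ s, aG s • cmon s := by
  simp [Fintype.sum_prod_type, Fin.sum_univ_two, aG, cmon, Gq]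
  ring

lemma Hq_eq : Hq = ∑ s, aH s • cmon s := by
  simp [Fintype.sum_prod_type, Fin.sum_univ_two, aH, cmon, Hq]
  ring

lemma Iq_eq : Iq = ∑ s, aI s • cmon s := by
  simp [Fintype.sum_prod_type, Fin.sum_univ_two, aI, cmon, Iq]
  ring

lemma D2_eq (j : Fin 4) (i : Fin 6) : D2 j i = ∑ s, aD2 j i s • cmon s := by
  fin_cases j <;> fin_cases i <;>
    first
    | exact Fq_eq
    | exact Gq_eq
    | exact Hq_eq
    | exact Iq_eq
    | (simp [D2, aD2])

lemma D2_mul (j : Fin 4) (i : Fin 6) (g : Mon) :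
    D2 j i * cmon g = ∑ h, aD2 j i (h - g) • cmon h := by
  rw [D2_eq, Finset.sum_mul,
    ← Equiv.sum_comp (Equiv.addRight g) (fun h => aD2 j i (h - g) • cmon h)]
  refine Finset.sum_congr rfl fun s _ => ?_
  rw [Equiv.coe_addRight, add_sub_cancel_right, ← cmon_mul]
  have h4 : ∀ t : ZMod 2, t = 0 ∨ t = 1 := by decide
  rcases h4 (aD2 j i s) with ht | ht
  · rw [ht, zero_smul, zero_smul, zero_mul]
  · rw [ht, one_smul, one_smul]

section
variable (b : Module.Basis (Fin 6 × Fin 2 × Fin 2 × Fin 2 × Fin 2) (ZMod 2) (Fin 6 → Squot))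

lemma cmon_li (hb : ∀ (i : Fin 6) (g : Mon), b (i, g) = Pi.single i (cmon g)) :
    LinearIndependent (ZMod 2) cmon := by
  apply LinearIndependent.of_comp (LinearMap.single (ZMod 2) (fun _ : Fin 6 => Squot) 0)
  have h := b.linearIndependent.comp (fun g : Mon => ((0 : Fin 6), g))
    (fun g h hgh => (Prod.mk.inj hgh).2)
  have he : (LinearMap.single (ZMod 2) (fun _ : Fin 6 => Squot) 0) ∘ cmon =
      b ∘ (fun g : Mon => ((0 : Fin 6), g)) := by
    funext g
    simp [hb]
  rw [he]
  exact h

lemma row_eq (hb : ∀ (i : Fin 6) (g : Mon), b (i, g) = Pi.single i (cmon g))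
    (v : Fin 6 → Squot) (hv : D2.mulVec v = 0) (j : Fin 4) (h : Mon) :
    ∑ p ∈ (b.repr v).support, aD2 j p.1 (h - p.2) = 0 := by
  have hvi : ∀ j, D2.mulVec v j = ∑ p, b.repr v p • (D2 j p.1 * cmon p.2) := by
    intro j
    conv_lhs => rw [← b.sum_repr v]
    rw [Matrix.mulVec_sum, Finset.sum_apply]
    refine Finset.sum_congr rfl fun p _ => ?_
    obtain ⟨i, g⟩ := p
    rw [hb, Matrix.mulVec_smul, Pi.smul_apply]
    simp [Matrix.mulVec_single]
  have h1 := hvi j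
  rw [hv, Pi.zero_apply] at h1
  simp only [D2_mul, Finset.smul_sum, smul_smul] at h1
  rw [Finset.sum_comm] at h1
  simp only [← Finset.sum_smul] at h1
  have h2 := Fintype.linearIndependent_iff.1 (cmon_li b hb) _ h1.symm h
  rw [← h2]
  refine Finset.sum_subset_zero_on_sdiff (Finset.subset_univ _) ?_ ?_
  · intro p hp
    have : b.repr v p = 0 := by simpa using hp
    simp [this]
  · intro p hp
    have h3 : b.repr v p ≠ 0 := by simpa using hp
    have h4 : ∀ t : ZMod 2, t ≠ 0 → t = 1 := by decide
    simp [h4 _ h3]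

lemma prod_ne (hb : ∀ (i : Fin 6) (g : Mon), b (i, g) = Pi.single i (cmon g)) :
    (1 + wq) * (1 + xq) * (1 + yq) * (1 + zq) ≠ 0 := by
  intro h0
  have h1 : ∑ g : Mon, (1 : ZMod 2) • cmon g = 0 := by
    rw [← h0]
    simp [Fintype.sum_prod_type, Fin.sum_univ_two, cmon]
    ring
  have := Fintype.linearIndependent_iff.1 (cmon_li b hb) _ h1 0
  exact one_ne_zero this

end

/-- With `S = 𝔽₂[w,x,y,z]/⟨w²−1, x²−1, y²−1, z²−1⟩`,
`F = (1+x)(1+yz)`, `G = (1+y)(1+zw)`, `H = (1+z)(1+wx)`, `I = (1+w)(1+xy)`,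
and the Koszul block matrices `D₂ : S⁶ → S⁴`, `D₃ : S⁴ → S⁶`: measuring the
Hamming weight `|v|` of `v ∈ S⁶ ≅ 𝔽₂⁹⁶` as the number of nonzero coordinates
in the `𝔽₂`-basis of `S⁶` consisting of the monomials `wᵃxᵇyᶜzᵈ` in each of
the 6 copies of `S`, the Z-distance of this `[[96,44,4]]` code equals `4`:
every `v ∈ ker d₂` with `v ∉ im d₃` has `|v| ≥ 4`, and some such `v` has
`|v| = 4`. -/
theorem mm_code_96_44_z_distance_eq_four
    (b : Module.Basis (Fin 6 × Fin 2 × Fin 2 × Fin 2 × Fin 2) (ZMod 2) (Fin 6 → Squot))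
    (hb : ∀ (i : Fin 6) (a₁ a₂ a₃ a₄ : Fin 2),
      b (i, a₁, a₂, a₃, a₄) =
        Pi.single i
          (wq ^ (a₁ : ℕ) * xq ^ (a₂ : ℕ) * yq ^ (a₃ : ℕ) * zq ^ (a₄ : ℕ))) :
    (∀ v : Fin 6 → Squot, D2.mulVec v = 0 → ¬(∃ u, D3.mulVec u = v) →
      4 ≤ (b.repr v).support.card) ∧
    (∃ v : Fin 6 → Squot, D2.mulVec v = 0 ∧ ¬(∃ u, D3.mulVec u = v) ∧
      (b.repr v).support.card = 4) := by
  have hb' : ∀ (i : Fin 6) (g : Mon), b (i, g) = Pi.single i (cmon g) :=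
    fun i g => hb i g.1 g.2.1 g.2.2.1 g.2.2.2
  refine ⟨fun v hv hn => ?_, Pi.single 0 ((1 + xq) * (1 + yq)), ?_, ?_, ?_⟩
  · by_contra hlt
    have hP := comb _ (not_le.1 hlt) (row_eq b hb' v hv)
    have hv0 : v = 0 := by
      rw [Finsupp.support_eq_empty] at hP
      simpa using hP
    exact hn ⟨0, by rw [hv0, Matrix.mulVec_zero]⟩
  · have hF : Fq * ((1 + xq) * (1 + yq)) = 0 := by
      unfold Fq
      linear_combination (1 + yq * zq) * (1 + yq) * (xq_sq + (1 + xq) * two_eq)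
    have hG : Gq * ((1 + xq) * (1 + yq)) = 0 := by
      unfold Gq
      linear_combination (1 + zq * wq) * (1 + xq) * (yq_sq + (1 + yq) * two_eq)
    funext j
    rw [Matrix.mulVec_single]
    fin_cases j <;> simp [D2, hF, hG]
  · rintro ⟨u, hu⟩
    have h0 := congrFun hu 0
    simp [D3, Matrix.mulVec, dotProduct, Fin.sum_univ_succ] at h0
    apply prod_ne b hb'
    have hz : (1 + zq) * (1 + zq) = 0 := by
      linear_combination zq_sq + (1 + zq) * two_eq
    have hw : (1 + wq) * (1 + wq) = 0 := by
      linear_combination wq_sq + (1 + wq) * two_eq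
    unfold Hq Iq at h0
    linear_combination (-(1 + wq) * (1 + zq)) * h0 + (1 + wq) * (1 + wq * xq) * u 0 * hz
      + (1 + zq) * (1 + xq * yq) * u 1 * hw
  · have hv : (Pi.single 0 ((1 + xq) * (1 + yq)) : Fin 6 → Squot) =
        b (0, 0, 0, 0, 0) + b (0, 0, 1, 0, 0) + b (0, 0, 0, 1, 0) + b (0, 0, 1, 1, 0) := by
      simp only [hb, ← Pi.single_add]
      congr 1
      simp
      ring
    have hs : (b.repr (Pi.single 0 ((1 + xq) * (1 + yq)))).support =
        {(0, 0, 0, 0, 0), (0, 0, 1, 0, 0), (0, 0, 0, 1, 0), (0, 0, 1, 1, 0)} := by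
      ext p
      rw [hv]
      simp only [map_add, Module.Basis.repr_self, Finsupp.mem_support_iff, Finsupp.add_apply,
        Finsupp.single_apply]
      revert p
      decide +kernel
    rw [hs]
    rfl

end
end
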